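/- arXiv:math/0606734 — 4 statements merged into one kernel-verified Lean document; each statement's English description precedes it below -/
import Mathlib

section
/- Let n ≥ 3, let 0 ≤ ψ < φ ≤ π/2 and 0 < θ ≤ 2φ. Then A(n,θ,φ) ≥ A(n,θ,[ψ,φ]) ≥ A(n−1, ω(θ,φ)), where A(n−1,·) refers to codes on the unit sphere S^{n−2} ⊂ ℝ^{n−1}. -/
noncomputable section

/-- The "North pole" `(0, …, 0, 1)` of the unit sphere in `ℝ^n`. -/
def north (n : ℕ) : EuclideanSpace ℝ (Fin n) :=
  if h : 0 < n then EuclideanSpace.single ⟨n - 1, Nat.sub_lt h Nat.one_pos⟩ 1 else 0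

/-- Angular distance between two points: `arccos ⟨x, y⟩`. -/
def aDist {n : ℕ} (x y : EuclideanSpace ℝ (Fin n)) : ℝ := Real.arccos (inner ℝ x y : ℝ)

/-- A finite set of unit vectors with pairwise angular distance at least `θ`. -/
def IsCode {n : ℕ} (θ : ℝ) (C : Finset (EuclideanSpace ℝ (Fin n))) : Prop :=
  (∀ x ∈ C, ‖x‖ = 1) ∧ ∀ x ∈ C, ∀ y ∈ C, x ≠ y → θ ≤ aDist x y

/-- `A(n, θ)`: maximal size of a `θ`-code on the unit sphere `S^{n-1} ⊂ ℝ^n`. -/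
def sphereMax (n : ℕ) (θ : ℝ) : ℕ :=
  sSup {M | ∃ C : Finset (EuclideanSpace ℝ (Fin n)), IsCode θ C ∧ C.card = M}

/-- `A(n, θ, φ)`: maximal size of a `θ`-code in the cap of angular radius `φ` about the
North pole. -/
def capMax (n : ℕ) (θ φ : ℝ) : ℕ :=
  sSup {M | ∃ C : Finset (EuclideanSpace ℝ (Fin n)), IsCode θ C ∧
    (∀ x ∈ C, aDist x (north n) ≤ φ) ∧ C.card = M}

/-- `A(n, θ, [ψ, φ])`: maximal size of a `θ`-code in the strip `Z(n, [ψ, φ])`. -/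
def stripMax (n : ℕ) (θ ψ φ : ℝ) : ℕ :=
  sSup {M | ∃ C : Finset (EuclideanSpace ℝ (Fin n)), IsCode θ C ∧
    (∀ x ∈ C, ψ ≤ aDist x (north n) ∧ aDist x (north n) ≤ φ) ∧ C.card = M}

/-- `m(n, d)`: maximal number of points in the closed unit ball of `ℝ^n` with pairwise
Euclidean distances at least `d`. -/
def ballMax (n : ℕ) (d : ℝ) : ℕ :=
  sSup {M | ∃ C : Finset (EuclideanSpace ℝ (Fin n)), (∀ x ∈ C, ‖x‖ ≤ 1) ∧
    (∀ x ∈ C, ∀ y ∈ C, x ≠ y → d ≤ dist x y) ∧ C.card = M}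

/-- `ω(θ, α, β) = arccos((cos θ - cos α cos β) / (sin α sin β))`. -/
def omega2 (θ α β : ℝ) : ℝ :=
  Real.arccos ((Real.cos θ - Real.cos α * Real.cos β) / (Real.sin α * Real.sin β))

/-- `ω(θ, α) := ω(θ, α, α)`. -/
def omega1 (θ α : ℝ) : ℝ := omega2 θ α α

end


theorem aux_bdd (n : ℕ) (θ : ℝ) (hθ : 0 < θ) (hθ2 : θ ≤ Real.pi) :
    ∃ N : ℕ, ∀ C : Finset (EuclideanSpace ℝ (Fin n)), IsCode θ C → C.card ≤ N := by
  have hc : Real.cos θ < 1 := by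
    have := Real.cos_lt_cos_of_nonneg_of_le_pi le_rfl hθ2 hθ
    simpa using this
  set d := Real.sqrt (2 - 2 * Real.cos θ) with hd
  have hd0 : 0 < d := Real.sqrt_pos.mpr (by linarith)
  obtain ⟨t, -, htf, ht⟩ := (isCompact_sphere (0 : EuclideanSpace ℝ (Fin n)) 1).finite_cover_balls
    (half_pos hd0)
  refine ⟨htf.toFinset.card, fun C hC => ?_⟩
  have key : ∀ x ∈ C, ∃ y ∈ t, dist x y < d / 2 := by
    intro x hx
    have := ht (show x ∈ Metric.sphere 0 1 by simpa using hC.1 x hx)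
    simpa using this
  choose! f hf1 hf2 using key
  refine Finset.card_le_card_of_injOn f (fun x hx => by simpa using hf1 x hx) ?_
  intro x hx y hy hxy
  by_contra hne
  have h1 := hC.2 x hx y hy hne
  have hx1 := hC.1 x hx
  have hy1 := hC.1 y hy
  have hi : (inner ℝ x y : ℝ) ≤ Real.cos θ := by
    have habs := abs_real_inner_le_norm x y
    rw [hx1, hy1, abs_le] at habs
    have := Real.cos_le_cos_of_nonneg_of_le_pi hθ.le (Real.arccos_le_pi _) h1
    rwa [Real.cos_arccos (by linarith) (by linarith)] at this
  have h2 : dist x y < d := by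
    have a := hf2 x hx
    have b := hf2 y hy
    rw [← hxy] at b
    have := dist_triangle_right x y (f x)
    linarith
  have h3 : d ≤ dist x y := by
    rw [dist_eq_norm]
    apply Real.sqrt_le_iff.mpr ⟨norm_nonneg _, ?_⟩
    rw [norm_sub_sq_real, hx1, hy1]
    linarith
  linarith

/-- Lift of a point of the equatorial sphere to latitude `φ`. -/
noncomputable def liftPt {m : ℕ} (φ : ℝ) (x : EuclideanSpace ℝ (Fin m)) :
    EuclideanSpace ℝ (Fin (m + 1)) :=
  WithLp.toLp 2 (Fin.snoc (fun i => Real.sin φ * x i) (Real.cos φ) : Fin (m + 1) → ℝ)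

theorem liftPt_inner {m : ℕ} (φ : ℝ) (x y : EuclideanSpace ℝ (Fin m)) :
    (inner ℝ (liftPt φ x) (liftPt φ y) : ℝ)
      = Real.sin φ ^ 2 * inner ℝ x y + Real.cos φ ^ 2 := by
  simp only [liftPt, PiLp.inner_apply, Fin.sum_univ_castSucc, Fin.snoc_castSucc, Fin.snoc_last,
    Finset.mul_sum]
  congr 1
  · refine Finset.sum_congr rfl fun i _ => ?_
    simp
    ring
  · simp [sq]

theorem liftPt_north {m : ℕ} (φ : ℝ) (x : EuclideanSpace ℝ (Fin m)) :
    (inner ℝ (liftPt φ x) (north (m + 1)) : ℝ) = Real.cos φ := by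
  have h : north (m + 1) = EuclideanSpace.single (Fin.last m) (1 : ℝ) := by
    simp only [north, Nat.succ_pos, dif_pos]
    rfl
  rw [h, EuclideanSpace.inner_single_right]
  simp [liftPt]

theorem stmt5 (n : ℕ) (hn : 3 ≤ n) (θ ψ φ : ℝ) (hψ : 0 ≤ ψ) (hψφ : ψ < φ)
    (hφ : φ ≤ Real.pi / 2) (hθ : 0 < θ) (hθ2 : θ ≤ 2 * φ) :
    sphereMax (n - 1) (omega1 θ φ) ≤ stripMax n θ ψ φ ∧ stripMax n θ ψ φ ≤ capMax n θ φ := by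
  have hπ := Real.pi_pos
  have hθπ : θ ≤ Real.pi := by linarith
  obtain ⟨N, hN⟩ := aux_bdd n θ hθ hθπ
  constructor
  · obtain ⟨m, rfl⟩ : ∃ m, n = m + 1 := ⟨n - 1, by omega⟩
    rw [Nat.add_sub_cancel]
    refine csSup_le ⟨0, ∅, ⟨by simp, by simp⟩, rfl⟩ ?_
    rintro M ⟨C, hC, rfl⟩
    have hs : 0 < Real.sin φ := Real.sin_pos_of_pos_of_lt_pi (by linarith) (by linarith)
    have hsc := Real.sin_sq_add_cos_sq φ
    have hself : ∀ x ∈ C, (inner ℝ x x : ℝ) = 1 := fun x hx => by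
      rw [real_inner_self_eq_norm_sq, hC.1 x hx]; norm_num
    have hinj : Set.InjOn (liftPt φ) (C : Set (EuclideanSpace ℝ (Fin m))) := by
      intro x _ y _ h
      ext i
      have := congrArg (fun v : EuclideanSpace ℝ (Fin (m + 1)) => v i.castSucc) h
      simpa [liftPt, hs.ne'] using this
    classical
    refine le_csSup ⟨N, ?_⟩ ⟨C.image (liftPt φ), ⟨?_, ?_⟩, ?_, Finset.card_image_of_injOn hinj⟩
    · rintro M ⟨D, hD, -, rfl⟩
      exact hN D hD
    · intro z hz
      obtain ⟨x, hx, rfl⟩ := Finset.mem_image.mp hz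
      have h : ‖liftPt φ x‖ ^ 2 = 1 := by
        rw [← real_inner_self_eq_norm_sq, liftPt_inner, hself x hx]; linarith
      exact (pow_eq_one_iff_of_nonneg (norm_nonneg _) two_ne_zero).mp h
    · intro z hz w hw hzw
      obtain ⟨x, hx, rfl⟩ := Finset.mem_image.mp hz
      obtain ⟨y, hy, rfl⟩ := Finset.mem_image.mp hw
      have hxy : x ≠ y := fun h => hzw (by rw [h])
      have h1 := hC.2 x hx y hy hxy
      have habs := abs_real_inner_le_norm x y
      rw [hC.1 x hx, hC.1 y hy, abs_le] at habs
      have hs2 : 0 < Real.sin φ * Real.sin φ := mul_pos hs hs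
      have hcos : Real.cos (2 * φ) ≤ Real.cos θ :=
        Real.cos_le_cos_of_nonneg_of_le_pi hθ.le (by linarith) hθ2
      rw [Real.cos_two_mul] at hcos
      have h2 := Real.cos_le_cos_of_nonneg_of_le_pi (Real.arccos_nonneg _)
        (Real.arccos_le_pi _) h1
      rw [Real.cos_arccos (by linarith) (by linarith), Real.cos_arccos, le_div_iff₀ hs2] at h2
      · have h3 : (inner ℝ (liftPt φ x) (liftPt φ y) : ℝ) ≤ Real.cos θ := by
          rw [liftPt_inner]; nlinarith
        have h4 := Real.arccos_le_arccos h3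
        rwa [Real.arccos_cos hθ.le hθπ] at h4
      · rw [le_div_iff₀ hs2]; nlinarith
      · rw [div_le_one hs2]; nlinarith [Real.cos_le_one θ]
    · intro z hz
      obtain ⟨x, hx, rfl⟩ := Finset.mem_image.mp hz
      have : aDist (liftPt φ x) (north (m + 1)) = φ := by
        rw [aDist, liftPt_north, Real.arccos_cos (by linarith) (by linarith)]
      rw [this]
      exact ⟨hψφ.le, le_rfl⟩
  · refine csSup_le ⟨0, ∅, ⟨by simp, by simp⟩, by simp, rfl⟩ ?_
    rintro M ⟨C, hC, h, rfl⟩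
    refine le_csSup ⟨N, ?_⟩ ⟨C, hC, fun x hx => (h x hx).2, rfl⟩
    rintro M ⟨D, hD, -, rfl⟩
    exact hN D hD
end

section
/- Let n ≥ 3, let 0 < φ ≤ π/2 and φ < θ ≤ 2φ. Then A(n,θ,φ) ≤ k(n−1), where k(n−1) := A(n−1,π/3) is the kissing number of S^{n−2} ⊂ ℝ^{n−1}. Moreover, if K ≥ 2 is such that every K-point subset of the unit sphere S^{n−2} ⊂ ℝ^{n−1} contains two distinct points at angular distance at most π/3, then A(n,θ,φ) < K. -/
/-- Projection forgetting the last coordinate. -/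
noncomputable def prj {m : ℕ} (x : EuclideanSpace ℝ (Fin (m + 1))) : EuclideanSpace ℝ (Fin m) :=
  WithLp.toLp 2 (fun i => x i.castSucc)

lemma inner_prj {m : ℕ} (x y : EuclideanSpace ℝ (Fin (m + 1))) :
    (inner ℝ x y : ℝ) = inner ℝ (prj x) (prj y) + x (Fin.last m) * y (Fin.last m) := by
  simp only [PiLp.inner_apply, prj, Fin.sum_univ_castSucc]
  simp [mul_comm]

lemma inner_north {m : ℕ} (x : EuclideanSpace ℝ (Fin (m + 1))) :
    (inner ℝ x (north (m + 1)) : ℝ) = x (Fin.last m) := by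
  have : north (m + 1) = EuclideanSpace.single (Fin.last m) 1 := by
    simp [north, Fin.last]
  rw [this]
  simp [EuclideanSpace.inner_single_right]

lemma norm_prj {m : ℕ} (x : EuclideanSpace ℝ (Fin (m + 1))) (hx : ‖x‖ = 1) :
    ‖prj x‖ ^ 2 = 1 - x (Fin.last m) ^ 2 := by
  have h := inner_prj x x
  rw [real_inner_self_eq_norm_sq, real_inner_self_eq_norm_sq, hx] at h
  linarith

lemma alg_aux (a b s t : ℝ) (ha : 0 ≤ a) (hab : a ≤ b) (hb : b ≤ 1) (hs : 0 ≤ s) (ht : 0 ≤ t)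
    (hs2 : s ^ 2 = 1 - a ^ 2) (ht2 : t ^ 2 = 1 - b ^ 2) : a - a * b ≤ s * t / 2 := by
  have h0 : 0 ≤ s * t / 2 := by positivity
  refine abs_le_of_sq_le_sq' ?_ h0 |>.2
  have e : (s * t / 2) ^ 2 = (1 - a ^ 2) * (1 - b ^ 2) / 4 := by
    rw [← hs2, ← ht2]; ring
  rw [e]
  have k1 : 4 * a ^ 2 * (1 - b) ≤ (1 - a ^ 2) * (1 + b) := by
    have : 4 * a ^ 2 * (1 - a) ≤ (1 - a ^ 2) * (1 + a) := by
      have : 0 ≤ (1 - a) * ((1 - a) * (1 + 3 * a)) := by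
        have : 0 ≤ 1 - a := by linarith
        positivity
      nlinarith
    have h3 : 0 ≤ (b - a) * (4 * a ^ 2 + (1 - a ^ 2)) := by
      apply mul_nonneg (by linarith) (by nlinarith [sq_nonneg a])
    nlinarith
  have := mul_le_mul_of_nonneg_left k1 (by linarith : 0 ≤ 1 - b)
  nlinarith

lemma key {m : ℕ} {φ θ : ℝ} (hφ : 0 < φ) (hφ2 : φ ≤ Real.pi / 2) (h1 : φ < θ)
    (x y : EuclideanSpace ℝ (Fin (m + 1))) (hx : ‖x‖ = 1) (hy : ‖y‖ = 1)
    (hxn : aDist x (north (m + 1)) ≤ φ) (hyn : aDist y (north (m + 1)) ≤ φ)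
    (hxy : θ ≤ aDist x y) :
    0 < ‖prj x‖ ∧ 0 < ‖prj y‖ ∧ (inner ℝ (prj x) (prj y) : ℝ) < ‖prj x‖ * ‖prj y‖ / 2 := by
  have hc : 0 ≤ Real.cos φ := Real.cos_nonneg_of_mem_Icc ⟨by linarith, hφ2⟩
  have hcap : ∀ z : EuclideanSpace ℝ (Fin (m + 1)), ‖z‖ = 1 → aDist z (north (m + 1)) ≤ φ →
      Real.cos φ ≤ z (Fin.last m) ∧ z (Fin.last m) ≤ 1 := by
    intro z hz h
    have hp := norm_prj z hz
    have hb : z (Fin.last m) ^ 2 ≤ 1 := by nlinarith [sq_nonneg ‖prj z‖]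
    have hb' := abs_le.1 ((sq_le_one_iff_abs_le_one _).1 hb)
    refine ⟨?_, hb'.2⟩
    rw [aDist, inner_north] at h
    rw [← Real.cos_arccos hb'.1 hb'.2]
    exact Real.cos_le_cos_of_nonneg_of_le_pi (Real.arccos_nonneg _)
      (by linarith [Real.pi_pos]) h
  obtain ⟨ha, ha1⟩ := hcap x hx hxn
  obtain ⟨hb, hb1⟩ := hcap y hy hyn
  have hi : (inner ℝ x y : ℝ) < Real.cos φ := by
    by_contra hcon
    push Not at hcon
    have := Real.arccos_le_arccos hcon
    rw [Real.arccos_cos hφ.le (by linarith [Real.pi_pos])] at this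
    unfold aDist at hxy
    linarith
  have hpx := norm_prj x hx
  have hpy := norm_prj y hy
  rw [inner_prj] at hi
  refine ⟨?_, ?_, ?_⟩
  · rw [norm_pos_iff]
    intro h
    rw [h] at hi hpx
    simp at hi hpx
    have : x (Fin.last m) = 1 := by nlinarith
    rw [this] at hi
    linarith
  · rw [norm_pos_iff]
    intro h
    rw [h] at hi hpy
    simp at hi hpy
    have : y (Fin.last m) = 1 := by nlinarith
    rw [this] at hi
    linarith
  · rcases le_total (x (Fin.last m)) (y (Fin.last m)) with h | h
    · have := alg_aux _ _ _ _ (hc.trans ha) h hb1 (norm_nonneg _) (norm_nonneg _) hpx hpy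
      linarith
    · have := alg_aux _ _ _ _ (hc.trans hb) h ha1 (norm_nonneg _) (norm_nonneg _) hpy hpx
      linarith

/-- Normalised projection. -/
noncomputable def dir {m : ℕ} (x : EuclideanSpace ℝ (Fin (m + 1))) : EuclideanSpace ℝ (Fin m) :=
  (‖prj x‖)⁻¹ • prj x

lemma exists_proj {m : ℕ} {φ θ : ℝ} (hφ : 0 < φ) (hφ2 : φ ≤ Real.pi / 2) (h1 : φ < θ)
    (C : Finset (EuclideanSpace ℝ (Fin (m + 1)))) (hC : IsCode θ C)
    (hcap : ∀ x ∈ C, aDist x (north (m + 1)) ≤ φ) (h2 : 2 ≤ C.card) :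
    ∃ D : Finset (EuclideanSpace ℝ (Fin m)), (∀ x ∈ D, ‖x‖ = 1) ∧ D.card = C.card ∧
      ∀ x ∈ D, ∀ y ∈ D, x ≠ y → Real.pi / 3 < aDist x y := by
  classical
  have hk := fun x hx y hy hxy => key hφ hφ2 h1 x y (hC.1 x hx) (hC.1 y hy) (hcap x hx)
    (hcap y hy) (hC.2 x hx y hy hxy)
  have hpos : ∀ x ∈ C, 0 < ‖prj x‖ := by
    intro x hx
    obtain ⟨y, hy, hne⟩ := Finset.exists_mem_ne (by omega : 1 < C.card) x
    exact (hk x hx y hy hne.symm).1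
  have hnorm : ∀ x ∈ C, ‖dir x‖ = 1 := by
    intro x hx
    have := hpos x hx
    rw [dir, norm_smul, norm_inv, norm_norm, inv_mul_cancel₀ this.ne']
  have hin : ∀ x ∈ C, ∀ y ∈ C, x ≠ y → (inner ℝ (dir x) (dir y) : ℝ) < 1 / 2 := by
    intro x hx y hy hxy
    obtain ⟨p, q, r⟩ := hk x hx y hy hxy
    rw [dir, dir, real_inner_smul_left, real_inner_smul_right, ← mul_assoc, ← mul_inv,
      inv_mul_lt_iff₀ (by positivity)]
    linarith
  refine ⟨C.image dir, ?_, ?_, ?_⟩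
  · intro x hx
    obtain ⟨z, hz, rfl⟩ := Finset.mem_image.1 hx
    exact hnorm z hz
  · apply Finset.card_image_of_injOn
    intro x hx y hy hxy
    by_contra hne
    have := hin x hx y hy hne
    rw [← hxy, real_inner_self_eq_norm_sq, hnorm x hx] at this
    norm_num at this
  · intro x hx y hy hxy
    obtain ⟨z, hz, rfl⟩ := Finset.mem_image.1 hx
    obtain ⟨w, hw, rfl⟩ := Finset.mem_image.1 hy
    have hzw : z ≠ w := fun h => hxy (by rw [h])
    have hlt := hin z hz w hw hzw
    have hge : -1 ≤ (inner ℝ (dir z) (dir w) : ℝ) := by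
      have := abs_real_inner_le_norm (dir z) (dir w)
      rw [hnorm z hz, hnorm w hw, mul_one] at this
      exact (abs_le.1 this).1
    have := Real.arccos_lt_arccos hge hlt (by norm_num)
    rwa [← Real.cos_pi_div_three, Real.arccos_cos (by positivity)
      (by linarith [Real.pi_pos])] at this

lemma bdd_sphere (m : ℕ) : BddAbove {M | ∃ C : Finset (EuclideanSpace ℝ (Fin m)),
    IsCode (Real.pi / 3) C ∧ C.card = M} := by
  refine ⟨5 ^ Module.finrank ℝ (EuclideanSpace ℝ (Fin m)), ?_⟩
  rintro M ⟨C, hC, rfl⟩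
  apply Besicovitch.card_le_of_separated
  · intro c hc
    rw [hC.1 c hc]; norm_num
  · intro c hc d hd hne
    have h := hC.2 c hc d hd hne
    have hi : (inner ℝ c d : ℝ) ≤ 1 / 2 := by
      by_contra hcon
      push Not at hcon
      have hle : (inner ℝ c d : ℝ) ≤ 1 := by
        have := real_inner_le_norm c d
        rwa [hC.1 c hc, hC.1 d hd, mul_one] at this
      have := Real.arccos_lt_arccos (by norm_num) hcon hle
      rw [← Real.cos_pi_div_three, Real.arccos_cos (by positivity)
        (by linarith [Real.pi_pos])] at this
      unfold aDist at h
      linarith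
    have e := norm_sub_sq_real c d
    rw [hC.1 c hc, hC.1 d hd] at e
    nlinarith [norm_nonneg (c - d)]

lemma main_aux (m : ℕ) (hm : 2 ≤ m) (θ φ : ℝ) (hφ : 0 < φ) (hφ2 : φ ≤ Real.pi / 2)
    (h1 : φ < θ) :
    capMax (m + 1) θ φ ≤ sphereMax m (Real.pi / 3) ∧
    ∀ K : ℕ, 2 ≤ K →
      (∀ C : Finset (EuclideanSpace ℝ (Fin m)), (∀ x ∈ C, ‖x‖ = 1) → C.card = K →
        ∃ x ∈ C, ∃ y ∈ C, x ≠ y ∧ aDist x y ≤ Real.pi / 3) →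
      capMax (m + 1) θ φ < K := by
  have hne : {M | ∃ C : Finset (EuclideanSpace ℝ (Fin (m + 1))), IsCode θ C ∧
    (∀ x ∈ C, aDist x (north (m + 1)) ≤ φ) ∧ C.card = M}.Nonempty :=
    ⟨0, ∅, by simp [IsCode], by simp, by simp⟩
  constructor
  · apply csSup_le hne
    rintro M ⟨C, hC, hcap, rfl⟩
    by_cases h2 : 2 ≤ C.card
    · obtain ⟨D, hD, hcard, hsep⟩ := exists_proj hφ hφ2 h1 C hC hcap h2
      exact le_csSup (bdd_sphere m) ⟨D, ⟨hD, fun x hx y hy h => (hsep x hx y hy h).le⟩, hcard⟩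
    · refine le_trans (by omega : C.card ≤ 1) ?_
      refine le_csSup (bdd_sphere m) ⟨{EuclideanSpace.single ⟨0, by omega⟩ 1}, ⟨?_, ?_⟩, by simp⟩
      · simp
      · intro x hx y hy h
        rw [Finset.mem_singleton] at hx hy
        exact absurd (hx.trans hy.symm) h
  · intro K hK hyp
    have hle : capMax (m + 1) θ φ ≤ K - 1 := by
      apply csSup_le hne
      rintro M ⟨C, hC, hcap, rfl⟩
      by_contra hcon
      obtain ⟨D, hD, hcard, hsep⟩ := exists_proj hφ hφ2 h1 C hC hcap (by omega)
      obtain ⟨E, hE, hEc⟩ := Finset.exists_subset_card_eq (by omega : K ≤ D.card)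
      obtain ⟨x, hx, y, hy, hxy, hd⟩ := hyp E (fun x hx => hD x (hE hx)) hEc
      exact absurd hd (not_le.2 (hsep x (hE hx) y (hE hy) hxy))
    omega

theorem stmt6 (n : ℕ) (hn : 3 ≤ n) (θ φ : ℝ) (hφ : 0 < φ) (hφ2 : φ ≤ Real.pi / 2)
    (h1 : φ < θ) (h2 : θ ≤ 2 * φ) :
    capMax n θ φ ≤ sphereMax (n - 1) (Real.pi / 3) ∧
    ∀ K : ℕ, 2 ≤ K →
      (∀ C : Finset (EuclideanSpace ℝ (Fin (n - 1))), (∀ x ∈ C, ‖x‖ = 1) → C.card = K →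
        ∃ x ∈ C, ∃ y ∈ C, x ≠ y ∧ aDist x y ≤ Real.pi / 3) →
      capMax n θ φ < K := by
  obtain ⟨m, rfl⟩ : ∃ m, n = m + 1 := ⟨n - 1, by omega⟩
  exact main_aux m (by omega) θ φ hφ hφ2 h1
end

section
/- Let n ≥ 3, let 0 < φ ≤ π/2 and arccos(cos²φ) < θ ≤ 2φ. Then A(n,θ,φ) = max{M ∈ ℕ : 2 ≤ M ≤ n and arccos(−1/(M−1)) ≥ ω(θ,φ)}. -/
open Finset in
lemma li_aux {V ι : Type*} [NormedAddCommGroup V] [InnerProductSpace ℝ V] [Fintype ι]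
    (v : ι → V) (z : V) (h1 : ∀ i j, i ≠ j → inner ℝ (v i) (v j) ≤ 0)
    (h2 : ∀ i, inner ℝ (v i) z < 0) : LinearIndependent ℝ v := by
  rw [Fintype.linearIndependent_iff]
  intro g hg
  have key : ∀ f : ι → ℝ, (∀ i, 0 ≤ f i) → ∑ i, f i • v i = 0 → ∀ i, f i = 0 := by
    intro f hf h0 i
    have h : ∑ i, f i * (- inner ℝ (v i) z) = 0 := by
      have := congrArg (fun y => inner ℝ y z) h0
      simp only [sum_inner, inner_smul_left, inner_zero_left] at this
      simp at this
      simp [this]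
    have h' := (Finset.sum_eq_zero_iff_of_nonneg (fun i _ => mul_nonneg (hf i)
      (by linarith [h2 i]))).1 h i (Finset.mem_univ i)
    rcases mul_eq_zero.1 h' with h' | h'
    · exact h'
    · linarith [h2 i]
  have hsub : ∑ i, (g i)⁺ • v i = ∑ i, (g i)⁻ • v i := by
    rw [← sub_eq_zero, ← Finset.sum_sub_distrib, ← hg]
    refine Finset.sum_congr rfl fun i _ => ?_
    rw [← sub_smul, posPart_sub_negPart]
  have hz : ∑ i, (g i)⁺ • v i = 0 := by
    rw [← inner_self_eq_zero (𝕜 := ℝ)]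
    refine le_antisymm ?_ real_inner_self_nonneg
    nth_rewrite 2 [hsub]
    rw [sum_inner]
    refine Finset.sum_nonpos fun i _ => ?_
    rw [inner_sum]
    refine Finset.sum_nonpos fun j _ => ?_
    rw [inner_smul_left, inner_smul_right]
    simp only [conj_trivial]
    by_cases hij : i = j
    · subst hij
      have : (g i)⁺ * (g i)⁻ = 0 := by
        rcases le_total 0 (g i) with h | h
        · rw [negPart_eq_zero.2 h, mul_zero]
        · rw [posPart_eq_zero.2 h, zero_mul]
      rw [← mul_assoc, this, zero_mul]
    · rw [← mul_assoc]
      exact mul_nonpos_of_nonneg_of_nonpos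
        (mul_nonneg (posPart_nonneg _) (negPart_nonneg _)) (h1 i j hij)
  intro i
  have a := key _ (fun i => posPart_nonneg (g i)) hz i
  have b := key _ (fun i => negPart_nonneg (g i)) (hsub ▸ hz) i
  rw [← posPart_sub_negPart (g i), a, b, sub_zero]

lemma north_norm (n : ℕ) (hn : 0 < n) : ‖north n‖ = 1 := by
  simp [north, hn]

lemma simplex_aux (n M : ℕ) (hM : 0 < M) (hMn : M ≤ n) (e : EuclideanSpace ℝ (Fin n))
    (he : ‖e‖ = 1) : ∃ w : Fin M → EuclideanSpace ℝ (Fin n),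
      Orthonormal ℝ w ∧ ∀ i, inner ℝ (w i) e = 1 / √(M : ℝ) := by
  have hM0 : (0:ℝ) < M := by exact_mod_cast hM
  have hs : 0 < √(M:ℝ) := Real.sqrt_pos.2 hM0
  have hss : √(M:ℝ) * √(M:ℝ) = M := Real.mul_self_sqrt hM0.le
  let b : Fin M → EuclideanSpace ℝ (Fin n) := fun i =>
    EuclideanSpace.basisFun (Fin n) ℝ (Fin.castLE hMn i)
  have hb : Orthonormal ℝ b :=
    (EuclideanSpace.basisFun (Fin n) ℝ).orthonormal.comp _ (Fin.castLE_injective hMn)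
  let p := (1 / √(M:ℝ)) • ∑ i, b i
  have hbp : ∀ i, inner ℝ (b i) p = 1 / √(M:ℝ) := by
    intro i
    simp only [p, inner_smul_right, inner_sum]
    simp [orthonormal_iff_ite.1 hb]
  have hp : ‖p‖ = ‖e‖ := by
    rw [he]
    have : inner ℝ p p = (1:ℝ) := by
      nth_rewrite 1 [show p = (1 / √(M:ℝ)) • ∑ i, b i from rfl]
      rw [inner_smul_left, sum_inner]
      simp only [hbp]
      simp
      field_simp
      rw [sq, hss]
    rw [real_inner_self_eq_norm_sq] at this
    exact (pow_eq_one_iff_of_nonneg (norm_nonneg p) two_ne_zero).1 this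
  let R := (ℝ ∙ (p - e))ᗮ.reflection
  have hR : R p = e := Submodule.reflection_sub hp
  refine ⟨fun i => R (b i), ?_, fun i => ?_⟩
  · exact hb.comp_linearIsometryEquiv R
  · rw [← hR, R.inner_map_map, hbp]

lemma lower_aux (n M : ℕ) (hM : 2 ≤ M) (hMn : M ≤ n) (θ φ : ℝ) (hφ : 0 < φ)
    (hφ2 : φ ≤ Real.pi / 2) (hθ0 : 0 ≤ θ) (hθ : θ ≤ Real.pi)
    (h : Real.sin φ ^ 2 * (-1 / ((M:ℝ) - 1)) + Real.cos φ ^ 2 ≤ Real.cos θ)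
    (hlt : Real.cos θ < 1) :
    ∃ C : Finset (EuclideanSpace ℝ (Fin n)), IsCode θ C ∧
    (∀ x ∈ C, aDist x (north n) ≤ φ) ∧ C.card = M := by
  classical
  have he := north_norm n (by omega)
  set e := north n
  obtain ⟨w, hw, hwe⟩ := simplex_aux n M (by omega) hMn e he
  have hM1 : (0:ℝ) < (M:ℝ) - 1 := by
    have : (2:ℝ) ≤ M := by exact_mod_cast hM
    linarith
  have hM0 : (0:ℝ) < M := by linarith
  set r := √(M:ℝ) with hr
  have hr0 : 0 < r := Real.sqrt_pos.2 hM0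
  have hrr : r ^ 2 = M := Real.sq_sqrt hM0.le
  set k := √((M:ℝ) / (M - 1)) with hk
  have hkk : k ^ 2 = (M:ℝ) / (M - 1) := Real.sq_sqrt (by positivity)
  set s := Real.sin φ
  set c := Real.cos φ
  have hsc : s ^ 2 + c ^ 2 = 1 := Real.sin_sq_add_cos_sq φ
  let x : Fin M → EuclideanSpace ℝ (Fin n) := fun i => (s * k) • (w i - (1 / r) • e) + c • e
  have hee : inner ℝ e e = (1:ℝ) := by rw [real_inner_self_eq_norm_sq, he]; norm_num
  have hew : ∀ i, inner ℝ e (w i) = 1 / r := fun i => by rw [real_inner_comm, hwe]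
  have hin : ∀ i j, inner ℝ (x i) (x j) =
      s ^ 2 * ((M:ℝ) / (M-1)) * (inner ℝ (w i) (w j) - 1 / M) + c ^ 2 := by
    intro i j
    simp only [x, inner_add_left, inner_add_right, inner_sub_left, inner_sub_right,
      inner_smul_left, inner_smul_right, hee, hew, hwe, conj_trivial]
    rw [← hkk, ← hrr]
    field_simp
    ring
  have hxe : ∀ i, inner ℝ (x i) e = c := by
    intro i
    simp only [x, inner_add_left, inner_sub_left,
      inner_smul_left, hee, hwe, conj_trivial]
    ring
  have hii : ∀ i, inner ℝ (x i) (x i) = (1:ℝ) := by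
    intro i
    rw [hin, real_inner_self_eq_norm_sq, hw.1 i]
    have : s ^ 2 * ((M:ℝ) / (M-1)) * (1 ^ 2 - 1 / M) = s ^ 2 := by field_simp
    rw [this, hsc]
  have hij : ∀ i j, i ≠ j → inner ℝ (x i) (x j) ≤ Real.cos θ := by
    intro i j hne
    rw [hin, hw.2 hne]
    refine le_trans (le_of_eq ?_) h
    field_simp
    ring
  have hinj : Function.Injective x := by
    intro i j hx
    by_contra hne
    have h1 := hij i j hne
    rw [← hx, hii] at h1
    linarith
  refine ⟨Finset.univ.image x, ⟨?_, ?_⟩, ?_, ?_⟩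
  · intro y hy
    obtain ⟨i, -, rfl⟩ := Finset.mem_image.1 hy
    have := hii i
    rw [real_inner_self_eq_norm_sq] at this
    exact (pow_eq_one_iff_of_nonneg (norm_nonneg (x i)) two_ne_zero).1 this
  · intro y hy y' hy' hne
    obtain ⟨i, -, rfl⟩ := Finset.mem_image.1 hy
    obtain ⟨j, -, rfl⟩ := Finset.mem_image.1 hy'
    have := hij i j (fun h => hne (by rw [h]))
    rw [aDist, ← Real.arccos_cos hθ0 hθ]
    exact Real.arccos_le_arccos this
  · intro y hy
    obtain ⟨i, -, rfl⟩ := Finset.mem_image.1 hy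
    rw [aDist, hxe, Real.arccos_cos hφ.le (by linarith [Real.pi_pos])]
  · rw [Finset.card_image_of_injective _ hinj]; simp

lemma upper_aux (n : ℕ) (hn : 0 < n) (t c : ℝ) (hc : 0 ≤ c) (ht : t < c ^ 2)
    (C : Finset (EuclideanSpace ℝ (Fin n))) (hC1 : ∀ x ∈ C, ‖x‖ = 1)
    (hC2 : ∀ x ∈ C, ∀ y ∈ C, x ≠ y → inner ℝ x y ≤ t)
    (hC3 : ∀ x ∈ C, c ≤ inner ℝ x (north n)) (hcard : 2 ≤ C.card) :
    C.card ≤ n ∧ 0 ≤ (1 - c ^ 2) + ((C.card : ℝ) - 1) * (t - c ^ 2) := by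
  classical
  have he := north_norm n hn
  set e := north n
  have hee : inner ℝ e e = (1:ℝ) := by rw [real_inner_self_eq_norm_sq, he]; norm_num
  let v : EuclideanSpace ℝ (Fin n) → EuclideanSpace ℝ (Fin n) := fun x => x - (inner ℝ x e : ℝ) • e
  have hin : ∀ x y, inner ℝ (v x) (v y) = inner ℝ x y - inner ℝ x e * inner ℝ y e := by
    intro x y
    simp only [v, inner_sub_left, inner_sub_right,
      inner_smul_left, inner_smul_right, hee, conj_trivial, real_inner_comm y e]
    ring
  have hve : ∀ x, inner ℝ (v x) e = 0 := by
    intro x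
    simp only [v, inner_sub_left, inner_smul_left, hee, conj_trivial]
    ring
  have hev : ∀ x, inner ℝ e (v x) = 0 := fun x => by rw [real_inner_comm, hve]
  have hij : ∀ x ∈ C, ∀ y ∈ C, x ≠ y → inner ℝ (v x) (v y) ≤ t - c ^ 2 := by
    intro x hx y hy hne
    rw [hin]
    have := hC2 x hx y hy hne
    have := mul_le_mul (hC3 x hx) (hC3 y hy) hc (hc.trans (hC3 x hx))
    linarith
  have hii : ∀ x ∈ C, inner ℝ (v x) (v x) ≤ 1 - c ^ 2 := by
    intro x hx
    rw [hin, real_inner_self_eq_norm_sq, hC1 x hx]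
    have := mul_le_mul (hC3 x hx) (hC3 x hx) hc (hc.trans (hC3 x hx))
    linarith
  constructor
  · obtain ⟨x0, hx0⟩ : C.Nonempty := Finset.card_pos.1 (by omega)
    have hli : LinearIndependent ℝ (fun x : C => if (x : EuclideanSpace ℝ (Fin n)) = x0 then e else v x) := by
      apply li_aux _ (v x0 - e)
      · rintro ⟨x, hx⟩ ⟨y, hy⟩ hne
        have hne' : x ≠ y := fun h => hne (by simp [h])
        dsimp only
        split_ifs with h1 h2 h2
        · exact absurd (h1.trans h2.symm) hne'
        · rw [hev]
        · rw [hve]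
        · linarith [hij x hx y hy hne']
      · rintro ⟨x, hx⟩
        dsimp only
        split_ifs with h1
        · rw [inner_sub_right, hev, hee]; norm_num
        · rw [inner_sub_right, hve]; linarith [hij x hx x0 hx0 h1]
    have := hli.fintype_card_le_finrank
    simpa using this
  · have h0 : 0 ≤ inner ℝ (∑ x ∈ C, v x) (∑ x ∈ C, v x) := real_inner_self_nonneg
    rw [sum_inner] at h0
    have h1 : ∀ x ∈ C, inner ℝ (v x) (∑ x ∈ C, v x) ≤
        (1 - c ^ 2) + ((C.card : ℝ) - 1) * (t - c ^ 2) := by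
      intro x hx
      rw [inner_sum, ← Finset.add_sum_erase _ _ hx]
      refine add_le_add (hii x hx) ?_
      have := Finset.sum_le_card_nsmul (C.erase x) (fun y => inner ℝ (v x) (v y)) (t - c ^ 2)
        (fun y hy => hij x hx y (Finset.mem_of_mem_erase hy) (Finset.ne_of_mem_erase hy).symm)
      rw [Finset.card_erase_of_mem hx, nsmul_eq_mul, Nat.cast_sub (by omega)] at this
      simpa using this
    have h2 := h0.trans (Finset.sum_le_card_nsmul _ _ _ h1)
    rw [nsmul_eq_mul] at h2
    have : (0:ℝ) < C.card := by exact_mod_cast (by omega : 0 < C.card)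
    exact nonneg_of_mul_nonneg_right h2 this

theorem stmt8 (n : ℕ) (hn : 3 ≤ n) (θ φ : ℝ) (hφ : 0 < φ) (hφ2 : φ ≤ Real.pi / 2)
    (h1 : Real.arccos (Real.cos φ ^ 2) < θ) (h2 : θ ≤ 2 * φ) :
    capMax n θ φ =
      sSup {M : ℕ | 2 ≤ M ∧ M ≤ n ∧ omega1 θ φ ≤ Real.arccos (-1 / ((M : ℝ) - 1))} := by
  have hpi := Real.pi_pos
  have hθ0 : 0 ≤ θ := (Real.arccos_nonneg _).trans h1.le
  have hθ : θ ≤ Real.pi := by linarith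
  have hs : 0 < Real.sin φ := Real.sin_pos_of_pos_of_lt_pi hφ (by linarith)
  have hc : 0 ≤ Real.cos φ := Real.cos_nonneg_of_neg_pi_div_two_le_of_le (by linarith) hφ2
  have hsc := Real.sin_sq_add_cos_sq φ
  have ht1 : Real.cos θ < Real.cos φ ^ 2 := by
    have := Real.cos_lt_cos_of_nonneg_of_le_pi (Real.arccos_nonneg _) hθ h1
    rwa [Real.cos_arccos (by nlinarith) (by nlinarith)] at this
  have ht2 : 2 * Real.cos φ ^ 2 - 1 ≤ Real.cos θ := by
    rw [← Real.cos_two_mul]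
    exact Real.cos_le_cos_of_nonneg_of_le_pi hθ0 (by linarith) h2
  have hcond : ∀ M : ℕ, 2 ≤ M → (omega1 θ φ ≤ Real.arccos (-1 / ((M : ℝ) - 1)) ↔
      Real.sin φ ^ 2 * (-1 / ((M:ℝ) - 1)) + Real.cos φ ^ 2 ≤ Real.cos θ) := by
    intro M hM
    have hM1 : (1:ℝ) ≤ (M:ℝ) - 1 := by
      have : (2:ℝ) ≤ M := by exact_mod_cast hM
      linarith
    have hq : 0 < Real.sin φ * Real.sin φ := by positivity
    have hd1 : -1 ≤ -1 / ((M:ℝ) - 1) := by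
      rw [le_div_iff₀ (by linarith)]; linarith
    have hd2 : -1 / ((M:ℝ) - 1) ≤ 1 := by
      rw [div_le_iff₀ (by linarith)]; linarith
    rw [omega1, omega2, Real.strictAntiOn_arccos.le_iff_ge ⟨?_, ?_⟩ ⟨hd1, hd2⟩, le_div_iff₀ hq]
    · constructor <;> intro h <;> nlinarith
    · rw [le_div_iff₀ hq]; nlinarith
    · rw [div_le_iff₀ hq]; nlinarith
  have hbig : ∀ k : ℕ, (∃ C : Finset (EuclideanSpace ℝ (Fin n)), IsCode θ C ∧
      (∀ x ∈ C, aDist x (north n) ≤ φ) ∧ C.card = k) → 2 ≤ k →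
      k ≤ n ∧ omega1 θ φ ≤ Real.arccos (-1 / ((k : ℝ) - 1)) := by
    rintro k ⟨C, ⟨hC1, hC2⟩, hC3, rfl⟩ hk
    have habs : ∀ x y : EuclideanSpace ℝ (Fin n), ‖x‖ = 1 → ‖y‖ = 1 →
        Real.cos (aDist x y) = inner ℝ x y := by
      intro x y hx hy
      have := abs_le.1 (abs_real_inner_le_norm x y)
      rw [hx, hy] at this
      rw [aDist, Real.cos_arccos (by linarith) (by linarith)]
    obtain ⟨a, b⟩ := upper_aux n (by omega) (Real.cos θ) (Real.cos φ) hc ht1 C hC1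
      (by
        intro x hx y hy hne
        rw [← habs x y (hC1 x hx) (hC1 y hy)]
        exact Real.cos_le_cos_of_nonneg_of_le_pi hθ0 (Real.arccos_le_pi _) (hC2 x hx y hy hne))
      (by
        intro x hx
        rw [← habs x _ (hC1 x hx) (north_norm n (by omega))]
        exact Real.cos_le_cos_of_nonneg_of_le_pi (Real.arccos_nonneg _) (by linarith) (hC3 x hx))
      hk
    refine ⟨a, (hcond _ hk).2 ?_⟩
    have hM1 : (0:ℝ) < (C.card:ℝ) - 1 := by
      have : (2:ℝ) ≤ C.card := by exact_mod_cast hk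
      linarith
    rw [← sub_nonneg]
    have : Real.cos θ - (Real.sin φ ^ 2 * (-1 / ((C.card:ℝ) - 1)) + Real.cos φ ^ 2) =
      ((1 - Real.cos φ ^ 2) + ((C.card : ℝ) - 1) * (Real.cos θ - Real.cos φ ^ 2)) / ((C.card:ℝ) - 1) := by
      rw [show Real.sin φ ^ 2 = 1 - Real.cos φ ^ 2 by linarith]; field_simp; ring
    rw [this]
    positivity
  have hmem2 : 2 ∈ {M : ℕ | 2 ≤ M ∧ M ≤ n ∧ omega1 θ φ ≤ Real.arccos (-1 / ((M : ℝ) - 1))} := by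
    refine ⟨le_rfl, by omega, (hcond 2 le_rfl).2 ?_⟩
    norm_num
    linarith
  have hbdd : BddAbove {M : ℕ | 2 ≤ M ∧ M ≤ n ∧ omega1 θ φ ≤ Real.arccos (-1 / ((M : ℝ) - 1))} :=
    ⟨n, fun M hM => hM.2.1⟩
  have hsubset : {M : ℕ | 2 ≤ M ∧ M ≤ n ∧ omega1 θ φ ≤ Real.arccos (-1 / ((M : ℝ) - 1))} ⊆
      {M | ∃ C : Finset (EuclideanSpace ℝ (Fin n)), IsCode θ C ∧
        (∀ x ∈ C, aDist x (north n) ≤ φ) ∧ C.card = M} := by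
    rintro M ⟨hM, hMn, h⟩
    exact lower_aux n M hM hMn θ φ hφ hφ2 hθ0 hθ ((hcond M hM).1 h) (by nlinarith)
  rw [capMax]
  apply le_antisymm
  · refine csSup_le ⟨2, hsubset hmem2⟩ fun k hk => ?_
    by_cases hk2 : 2 ≤ k
    · exact le_csSup hbdd ⟨hk2, hbig k hk hk2⟩
    · exact le_trans (by omega) (le_csSup hbdd hmem2)
  · refine csSup_le_csSup ⟨n, fun k hk => ?_⟩ ⟨2, hmem2⟩ hsubset
    by_cases hk2 : 2 ≤ k
    · exact (hbig k hk hk2).1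
    · omega
end

section
/- Let n ≥ 2, let 0 < φ, s ≥ 1 with s·φ ≤ π/2, and let 0 < θ ≤ 2φ. Define θ' := arccos( cos²(sφ) + (sin²(sφ)/sin²φ)·(cos θ − cos²φ) ). Then A(n,θ,φ) ≤ A(n,θ',sφ). -/
theorem aux_north_norm (n : ℕ) (hn : 2 ≤ n) : ‖north n‖ = 1 := by
  have h : 0 < n := by omega
  simp [north, h]

/-- Codes with inner products at most `q < 1` have bounded size. -/
theorem aux_bdd_s10 (n : ℕ) (q φ : ℝ) (hq : q < 1) :
    BddAbove {M | ∃ C : Finset (EuclideanSpace ℝ (Fin n)), IsCode (Real.arccos q) C ∧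
      (∀ x ∈ C, aDist x (north n) ≤ φ) ∧ C.card = M} := by
  have hpos : 0 < Real.arccos q := Real.arccos_pos.2 hq
  set r := Real.cos (Real.arccos q) with hr
  have hr1 : r < 1 := by
    have := Real.cos_lt_cos_of_nonneg_of_le_pi le_rfl (Real.arccos_le_pi q) hpos
    simpa [hr] using this
  set d := Real.sqrt (2 - 2 * r) with hd
  have hd0 : 0 < d := Real.sqrt_pos.2 (by linarith)
  have hd2 : d ^ 2 = 2 - 2 * r := Real.sq_sqrt (by linarith)
  have htb : TotallyBounded (Metric.sphere (0 : EuclideanSpace ℝ (Fin n)) 1) :=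
    (isCompact_sphere _ _).totallyBounded
  obtain ⟨t, ht, hcov⟩ := Metric.totallyBounded_iff.1 htb (d / 2) (by linarith)
  refine ⟨ht.toFinset.card, ?_⟩
  rintro M ⟨C, ⟨hC1, hC2⟩, -, rfl⟩
  have hex : ∀ x ∈ C, ∃ y ∈ t, dist x y < d / 2 := by
    intro x hx
    have := hcov (show x ∈ Metric.sphere _ _ by simpa using hC1 x hx)
    simpa using this
  choose! g hg1 hg2 using hex
  apply Finset.card_le_card_of_injOn g
  · intro x hx
    simpa using hg1 x hx
  · intro x hx y hy hxy
    by_contra hne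
    have h1 := hg2 x hx
    have h2 := hg2 y hy
    rw [← hxy, dist_comm] at h2
    have h3 : dist x y < d := by
      have := dist_triangle x (g x) y
      linarith
    have h4 := hC2 x hx y hy hne
    have hxn := hC1 x hx
    have hyn := hC1 y hy
    have habs := abs_real_inner_le_norm x y
    rw [hxn, hyn, mul_one, abs_le] at habs
    have h5 : inner ℝ x y ≤ r := by
      have := Real.cos_le_cos_of_nonneg_of_le_pi hpos.le (Real.arccos_le_pi _) h4
      rwa [Real.cos_arccos habs.1 habs.2] at this
    have h6 : dist x y ^ 2 = 2 - 2 * inner ℝ x y := by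
      rw [dist_eq_norm, norm_sub_sq_real, hxn, hyn]; ring
    have h7 : dist x y ^ 2 < d ^ 2 := by
      have := dist_nonneg (x := x) (y := y)
      gcongr
    linarith

/-- The dilation of the cap. -/
noncomputable def auxMap {n : ℕ} (t : ℝ) (e x : EuclideanSpace ℝ (Fin n)) :
    EuclideanSpace ℝ (Fin n) :=
  t • (x - (inner ℝ x e : ℝ) • e) + Real.sqrt (1 - t ^ 2 * (1 - (inner ℝ x e : ℝ) ^ 2)) • e

theorem auxMap_inner {n : ℕ} (t : ℝ) (e x y : EuclideanSpace ℝ (Fin n)) (he : ‖e‖ = 1) :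
    (inner ℝ (auxMap t e x) (auxMap t e y) : ℝ) =
      t ^ 2 * (inner ℝ x y - inner ℝ x e * inner ℝ y e) +
      Real.sqrt (1 - t ^ 2 * (1 - (inner ℝ x e : ℝ) ^ 2)) *
      Real.sqrt (1 - t ^ 2 * (1 - (inner ℝ y e : ℝ) ^ 2)) := by
  have hee : (inner ℝ e e : ℝ) = 1 := by rw [real_inner_self_eq_norm_sq, he]; norm_num
  simp only [auxMap, inner_add_left, inner_add_right, inner_sub_left, inner_sub_right,
    real_inner_smul_left, real_inner_smul_right, hee, real_inner_comm y e,
    real_inner_comm x e]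
  simp only [real_inner_comm e]
  ring

theorem auxMap_inner_e {n : ℕ} (t : ℝ) (e x : EuclideanSpace ℝ (Fin n)) (he : ‖e‖ = 1) :
    (inner ℝ (auxMap t e x) e : ℝ) =
      Real.sqrt (1 - t ^ 2 * (1 - (inner ℝ x e : ℝ) ^ 2)) := by
  have hee : (inner ℝ e e : ℝ) = 1 := by rw [real_inner_self_eq_norm_sq, he]; norm_num
  simp only [auxMap, inner_add_left, inner_sub_left, real_inner_smul_left, hee]
  ring

theorem aux_ineq (T c d : ℝ) (hT : 1 ≤ T) (hc : 0 ≤ c) (hd : 0 ≤ d)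
    (hP : 0 ≤ 1 - T * (1 - c ^ 2)) (hQ : 0 ≤ 1 - T * (1 - d ^ 2)) :
    Real.sqrt (1 - T * (1 - c ^ 2)) * Real.sqrt (1 - T * (1 - d ^ 2)) + (T - 1)
      ≤ T * (c * d) := by
  set p := Real.sqrt (1 - T * (1 - c ^ 2)) with hp
  set q := Real.sqrt (1 - T * (1 - d ^ 2)) with hq
  have hp2 : p ^ 2 = 1 - T * (1 - c ^ 2) := Real.sq_sqrt hP
  have hq2 : q ^ 2 = 1 - T * (1 - d ^ 2) := Real.sq_sqrt hQ
  have hnn : 0 ≤ T * (c * d) := by positivity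
  have hT : 0 ≤ T - 1 := by linarith
  refine abs_le_of_sq_le_sq' ?_ hnn |>.2
  have h1 : (T * (c * d)) ^ 2 = (T * c ^ 2) * (T * d ^ 2) := by ring
  have h2 : T * c ^ 2 = p ^ 2 + (T - 1) := by rw [hp2]; ring
  have h3 : T * d ^ 2 = q ^ 2 + (T - 1) := by rw [hq2]; ring
  rw [h1, h2, h3]
  nlinarith [mul_nonneg hT (sq_nonneg (p - q))]

theorem stmt10 (n : ℕ) (hn : 2 ≤ n) (θ φ s : ℝ) (hφ : 0 < φ) (hs : 1 ≤ s)
    (hsφ : s * φ ≤ Real.pi / 2) (hθ : 0 < θ) (hθ2 : θ ≤ 2 * φ) :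
    capMax n θ φ ≤
      capMax n (Real.arccos (Real.cos (s * φ) ^ 2 +
        (Real.sin (s * φ) ^ 2 / Real.sin φ ^ 2) * (Real.cos θ - Real.cos φ ^ 2))) (s * φ) := by
  have hle : φ ≤ s * φ := by nlinarith
  have hpi := Real.pi_pos
  set Φ := s * φ with hΦ
  have hsin : 0 < Real.sin φ := Real.sin_pos_of_pos_of_lt_pi hφ (by linarith)
  have hsinle : Real.sin φ ≤ Real.sin Φ :=
    Real.sin_le_sin_of_le_of_le_pi_div_two (by linarith) hsφ hle
  have hcosφ : 0 ≤ Real.cos φ := Real.cos_nonneg_of_mem_Icc ⟨by linarith, by linarith⟩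
  have hcosΦ : 0 ≤ Real.cos Φ := Real.cos_nonneg_of_mem_Icc ⟨by linarith, by linarith⟩
  set t := Real.sin Φ / Real.sin φ with ht
  have ht1 : 1 ≤ t := (one_le_div hsin).2 hsinle
  have hT1 : 1 ≤ t ^ 2 := one_le_pow₀ ht1
  have htmul : t * Real.sin φ = Real.sin Φ := div_mul_cancel₀ _ hsin.ne'
  have htsq : t ^ 2 * Real.sin φ ^ 2 = Real.sin Φ ^ 2 := by rw [← htmul]; ring
  have hsc1 := Real.sin_sq_add_cos_sq φ
  have hsc2 := Real.sin_sq_add_cos_sq Φ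
  have hq : Real.cos Φ ^ 2 + (Real.sin Φ ^ 2 / Real.sin φ ^ 2) *
      (Real.cos θ - Real.cos φ ^ 2) = 1 - t ^ 2 * (1 - Real.cos θ) := by
    rw [← div_pow, ← ht]
    have h1 : Real.cos Φ ^ 2 = 1 - t ^ 2 * Real.sin φ ^ 2 := by linarith
    have h2 : Real.cos φ ^ 2 = 1 - Real.sin φ ^ 2 := by linarith
    rw [h1, h2]; ring
  rw [hq]
  have hcosθ : Real.cos θ < 1 := by
    have := Real.cos_lt_cos_of_nonneg_of_le_pi le_rfl (show θ ≤ Real.pi by linarith) hθ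
    simpa using this
  set q := 1 - t ^ 2 * (1 - Real.cos θ) with hqdef
  have hq1 : q < 1 := by nlinarith
  have he := aux_north_norm n hn
  set e := north n with hedef
  unfold capMax
  refine csSup_le ⟨0, ∅, by simp [IsCode]⟩ ?_
  rintro M ⟨C, ⟨hC1, hC2⟩, hC3, rfl⟩
  have hc : ∀ x ∈ C, Real.cos φ ≤ inner ℝ x e := by
    intro x hx
    have h := hC3 x hx
    have habs := abs_real_inner_le_norm x e
    rw [hC1 x hx, he, mul_one, abs_le] at habs
    have := Real.cos_le_cos_of_nonneg_of_le_pi (Real.arccos_nonneg _) (by linarith) h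
    rwa [Real.cos_arccos habs.1 habs.2] at this
  have hP : ∀ x ∈ C, Real.cos Φ ^ 2 ≤ 1 - t ^ 2 * (1 - (inner ℝ x e : ℝ) ^ 2) := by
    intro x hx
    have h1 : Real.cos φ ^ 2 ≤ (inner ℝ x e : ℝ) ^ 2 := pow_le_pow_left₀ hcosφ (hc x hx) 2
    nlinarith
  have hnorm : ∀ x ∈ C, inner ℝ (auxMap t e x) (auxMap t e x) = (1 : ℝ) := by
    intro x hx
    rw [auxMap_inner t e x x he, Real.mul_self_sqrt ((sq_nonneg _).trans (hP x hx)),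
      real_inner_self_eq_norm_sq, hC1 x hx]
    ring
  have hpair : ∀ x ∈ C, ∀ y ∈ C, x ≠ y → inner ℝ (auxMap t e x) (auxMap t e y) ≤ q := by
    intro x hx y hy hne
    have habs := abs_real_inner_le_norm x y
    rw [hC1 x hx, hC1 y hy, mul_one, abs_le] at habs
    have h5 : inner ℝ x y ≤ Real.cos θ := by
      have := Real.cos_le_cos_of_nonneg_of_le_pi hθ.le (Real.arccos_le_pi _) (hC2 x hx y hy hne)
      rwa [Real.cos_arccos habs.1 habs.2] at this
    rw [auxMap_inner t e x y he]
    have h6 := aux_ineq (t ^ 2) (inner ℝ x e) (inner ℝ y e) hT1 (hcosφ.trans (hc x hx))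
      (hcosφ.trans (hc y hy)) ((sq_nonneg _).trans (hP x hx)) ((sq_nonneg _).trans (hP y hy))
    have h7 := mul_le_mul_of_nonneg_left h5 (show 0 ≤ t ^ 2 by positivity)
    rw [hqdef]
    linarith
  have hinj : Set.InjOn (auxMap t e) C := by
    intro x hx y hy hxy
    by_contra hne
    have h1 := hpair x hx y hy hne
    rw [← hxy, hnorm x hx] at h1
    linarith
  classical
  apply le_csSup (aux_bdd_s10 n q Φ hq1)
  refine ⟨C.image (auxMap t e), ⟨?_, ?_⟩, ?_, Finset.card_image_of_injOn hinj⟩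
  · simp only [Finset.mem_image]
    rintro _ ⟨x, hx, rfl⟩
    have := hnorm x hx
    rw [real_inner_self_eq_norm_sq] at this
    exact (pow_eq_one_iff_of_nonneg (norm_nonneg _) two_ne_zero).1 this
  · simp only [Finset.mem_image]
    rintro _ ⟨x, hx, rfl⟩ _ ⟨y, hy, rfl⟩ hne
    exact Real.arccos_le_arccos (hpair x hx y hy (fun h => hne (by rw [h])))
  · simp only [Finset.mem_image]
    rintro _ ⟨x, hx, rfl⟩
    rw [aDist, ← hedef, auxMap_inner_e t e x he]
    calc _ ≤ Real.arccos (Real.cos Φ) :=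
          Real.arccos_le_arccos (Real.le_sqrt_of_sq_le (hP x hx))
      _ = Φ := Real.arccos_cos (by linarith) (by linarith)
end
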